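/- (Cocycle/triple intersection for glueing.) Let f be a relevant family of homogeneous elements, closed under homogeneous divisors (f = f̲), of an M-graded commutative ring A, and let g and k be finite families of homogeneous elements of A. Consider the canonical ring homomorphisms between potions χ_{g} : A_{(f)} → A_{(f∪g)}, χ_{k} : A_{(f)} → A_{(f∪k)}, and χ_{g∪k} : A_{(f)} → A_{(f∪g∪k)}. Then, inside the topological space Spec(A_{(f)}), the intersection of the ranges of Spec.map χ_{g} and Spec.map χ_{k} equals the range of Spec.map χ_{g∪k}. -/

import Mathlib

/-!
Statement 9 (Cocycle/triple intersection for glueing): for a relevant, divisor-closed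
family `f` and finite families `g`, `k`, inside `Spec (A_{(f)})` the intersection of
the images of `Spec (A_{(f∪g)})` and `Spec (A_{(f∪k)})` equals the image of
`Spec (A_{(f∪g∪k)})`.
-/

open AlgebraicGeometry

/-- The set of degrees of homogeneous divisors of members of the family `f`. -/
def divisorDegrees {M A I : Type*} [AddCommGroup M] [CommRing A]
    (𝒜 : M → Submodule ℤ A) (f : I → A) : Set M :=
  {m | ∃ x : A, x ≠ 0 ∧ x ∈ 𝒜 m ∧ ∃ i, x ∣ f i}

/-- A family `f` of homogeneous elements of an `M`-graded ring is *relevant* if every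
`x ∈ M` has a positive multiple lying in the subgroup of `M` generated by the degrees
of the homogeneous divisors of members of `f`. -/
def IsRelevant {M A I : Type*} [AddCommGroup M] [CommRing A]
    (𝒜 : M → Submodule ℤ A) (f : I → A) : Prop :=
  ∀ x : M, ∃ n : ℕ, 0 < n ∧ n • x ∈ AddSubgroup.closure (divisorDegrees 𝒜 f)

/-- The canonical ring homomorphism between localizations of the same ring at two
nested submonoids `S ≤ T`. -/
noncomputable def locMap {A : Type*} [CommRing A] {S T : Submonoid A} (h : S ≤ T) :
    Localization S →+* Localization T :=
  IsLocalization.map (Localization T) (RingHom.id A)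
    (show S ≤ Submonoid.comap (RingHom.id A) T from h)

/-!
Let `S ≤ T` be generated by homogeneous elements, and let `N` consist of the degree-zero fractions
over `S` whose numerator divides an element of `T`. Relevance completes each homogeneous `b ∈ T` to
a degree-zero fraction `b ^ n * c / s` in `N`, so `A_{(T)}` is the localization of `A_{(S)}` at `N`
and the image of its spectrum is the set of primes disjoint from `N`. For `T = T₁ ⊔ T₂`, writing
`b = b₁ * b₂` and completing each factor separately shows that every element of `N` divides
`u₁ * u₂` with `uᵢ` in the corresponding submonoid for `Tᵢ`; so a prime which avoids both of these
submonoids avoids `N`.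
-/

section FractionDegrees

variable {M A σ : Type*} [AddCommMonoid M] [CommRing A] [SetLike σ A] {𝒜 : M → σ}
  [SetLike.GradedMonoid 𝒜] {S T T' : Submonoid A}

variable (𝒜) in
/-- The degrees `deg s - deg c` of the homogeneous fractions `s / c` with `s ∈ S` and `c` dividing
an element of `T`, written without subtraction. -/
def fractionDegrees (S T : Submonoid A) : AddSubmonoid M where
  carrier := {m | ∃ e, ∃ c ∈ 𝒜 e, c ∈ T.saturation ∧ ∃ s ∈ S, s ∈ 𝒜 (m + e)}
  zero_mem' := ⟨0, 1, SetLike.one_mem_graded 𝒜, one_mem _, 1, one_mem _, by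
    simpa using SetLike.one_mem_graded 𝒜⟩
  add_mem' := by
    rintro m m' ⟨e, c, hce, hcT, s, hsS, hs⟩ ⟨e', c', hce', hcT', s', hsS', hs'⟩
    refine ⟨e + e', c * c', SetLike.mul_mem_graded hce hce', mul_mem hcT hcT',
      s * s', mul_mem hsS hsS', ?_⟩
    rw [add_add_add_comm]
    exact SetLike.mul_mem_graded hs hs'

variable (𝒜) in
/-- Every homogeneous element of `T` can be multiplied by a homogeneous divisor of an element of `T`
to reach the degree of an element of `S`: the form in which relevance of `S` makes `A_{(T)}` a
localization of `A_{(S)}`. -/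
def DegreeCofinal (S T : Submonoid A) : Prop :=
  ∀ ⦃b⦄, b ∈ T → ∀ ⦃d⦄, b ∈ 𝒜 d → d ∈ fractionDegrees 𝒜 S T

theorem fractionDegrees_mono_right (h : T ≤ T') :
    fractionDegrees 𝒜 S T ≤ fractionDegrees 𝒜 S T' := by
  rintro m ⟨e, c, hce, hcT, hs⟩
  exact ⟨e, c, hce, (Submonoid.gc_saturation A).monotone_l h hcT, hs⟩

theorem mem_fractionDegrees_of_nsmul_mem {b : A} {d : M} (hbT : b ∈ T) (hbd : b ∈ 𝒜 d) {n : ℕ}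
    (hn : 0 < n) (hnd : n • d ∈ fractionDegrees 𝒜 S T) : d ∈ fractionDegrees 𝒜 S T := by
  obtain ⟨n, rfl⟩ := Nat.exists_eq_add_one_of_ne_zero hn.ne'
  obtain ⟨e, c, hce, hcT, s, hsS, hs⟩ := hnd
  refine ⟨n • d + e, b ^ n * c, SetLike.mul_mem_graded (SetLike.pow_mem_graded n hbd) hce,
    mul_mem (pow_mem (Submonoid.le_toSubmonoid_saturation hbT) n) hcT, s, hsS, ?_⟩
  rwa [← add_assoc, ← succ_nsmul']

end FractionDegrees

section HomogeneousDivisors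

variable {M A σ : Type*} [AddCommGroup M] [DecidableEq M] [CommRing A] [SetLike σ A]
  [AddSubgroupClass σ A] {𝒜 : M → σ} [GradedRing 𝒜] {S T T₁ T₂ : Submonoid A}

theorem exists_homogeneous_mul_eq_of_dvd {a t : A} {d j : M} (had : a ∈ 𝒜 d) (htj : t ∈ 𝒜 j)
    (hat : a ∣ t) : ∃ y ∈ 𝒜 (j - d), a * y = t := by
  obtain ⟨y, rfl⟩ := hat
  refine ⟨DirectSum.decompose 𝒜 y (j - d), SetLike.coe_mem _, ?_⟩
  rw [← DirectSum.coe_decompose_mul_add_of_left_mem 𝒜 had, add_sub_cancel,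
    DirectSum.decompose_of_mem_same 𝒜 htj]

theorem exists_homogeneous_mul_mem (hT : T ≤ SetLike.homogeneousSubmonoid 𝒜) {a : A} {d : M}
    (had : a ∈ 𝒜 d) (haT : a ∈ T.saturation) : ∃ e, ∃ y ∈ 𝒜 e, a * y ∈ T := by
  obtain ⟨t, htT, hat⟩ := Submonoid.mem_saturation_iff_exists_dvd.mp haT
  obtain ⟨j, htj⟩ := hT htT
  obtain ⟨y, hy, rfl⟩ := exists_homogeneous_mul_eq_of_dvd had htj hat
  exact ⟨j - d, y, hy, htT⟩

theorem neg_mem_fractionDegrees (hS : S ≤ SetLike.homogeneousSubmonoid 𝒜) {m : M}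
    (hm : m ∈ fractionDegrees 𝒜 S S) : -m ∈ fractionDegrees 𝒜 S S := by
  obtain ⟨e, c, hce, hcS, s, hsS, hs⟩ := hm
  obtain ⟨e', y, hye', hcyS⟩ := exists_homogeneous_mul_mem hS hce hcS
  have hyS : y ∈ S.saturation := Submonoid.mem_saturation_iff'.mpr ⟨c, hcyS⟩
  refine ⟨m + e + e', s * y, SetLike.mul_mem_graded hs hye',
    mul_mem (Submonoid.le_toSubmonoid_saturation hsS) hyS, c * y, hcyS, ?_⟩
  rw [add_assoc, neg_add_cancel_left]
  exact SetLike.mul_mem_graded hce hye'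

theorem DegreeCofinal.sup (hT₁ : T₁ ≤ SetLike.homogeneousSubmonoid 𝒜)
    (hT₂ : T₂ ≤ SetLike.homogeneousSubmonoid 𝒜) (h₁ : DegreeCofinal 𝒜 S T₁)
    (h₂ : DegreeCofinal 𝒜 S T₂) : DegreeCofinal 𝒜 S (T₁ ⊔ T₂) := by
  intro b hb d hbd
  obtain rfl | hb0 := eq_or_ne b 0
  · exact ⟨-d, 0, zero_mem _, Submonoid.le_toSubmonoid_saturation hb, 1, one_mem _, by
      simpa using SetLike.one_mem_graded 𝒜⟩
  obtain ⟨b₁, hb₁, b₂, hb₂, rfl⟩ := Submonoid.mem_sup.mp hb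
  obtain ⟨d₁, hbd₁⟩ := hT₁ hb₁
  obtain ⟨d₂, hbd₂⟩ := hT₂ hb₂
  obtain rfl : d = d₁ + d₂ :=
    DirectSum.degree_eq_of_mem_mem 𝒜 hbd (SetLike.mul_mem_graded hbd₁ hbd₂) hb0
  exact add_mem (fractionDegrees_mono_right le_sup_left (h₁ hb₁ hbd₁))
    (fractionDegrees_mono_right le_sup_right (h₂ hb₂ hbd₂))

end HomogeneousDivisors

section Relevant

variable {M A I : Type*} [AddCommGroup M] [DecidableEq M] [CommRing A] {𝒜 : M → Submodule ℤ A}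
  [GradedRing 𝒜] {f : I → A} {S T : Submonoid A}

theorem closure_divisorDegrees_subset_fractionDegrees
    (hS : S ≤ SetLike.homogeneousSubmonoid 𝒜) (hfS : Set.range f ⊆ S) :
    (AddSubgroup.closure (divisorDegrees 𝒜 f) : Set M) ⊆ fractionDegrees 𝒜 S S := by
  intro m hm
  induction hm using AddSubgroup.closure_induction with
  | mem m hm =>
    obtain ⟨x, -, hxm, i, hxi⟩ := hm
    have hfi : f i ∈ S := hfS ⟨i, rfl⟩
    obtain ⟨e, y, hye, hxyS⟩ := exists_homogeneous_mul_mem hS hxm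
      (Submonoid.mem_saturation_iff_exists_dvd.mpr ⟨f i, hfi, hxi⟩)
    exact ⟨e, y, hye, Submonoid.mem_saturation_iff'.mpr ⟨x, hxyS⟩, x * y, hxyS,
      SetLike.mul_mem_graded hxm hye⟩
  | zero => exact zero_mem _
  | add _ _ _ _ hm hm' => exact add_mem hm hm'
  | neg _ _ hm => exact neg_mem_fractionDegrees hS hm

theorem IsRelevant.degreeCofinal (hf : IsRelevant 𝒜 f) (hS : S ≤ SetLike.homogeneousSubmonoid 𝒜)
    (hfS : Set.range f ⊆ S) (hST : S ≤ T) : DegreeCofinal 𝒜 S T := by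
  intro b hbT d hbd
  obtain ⟨n, hn, hnd⟩ := hf d
  exact mem_fractionDegrees_of_nsmul_mem hbT hbd hn <| fractionDegrees_mono_right hST <|
    closure_divisorDegrees_subset_fractionDegrees hS hfS hnd

end Relevant

open HomogeneousLocalization in
theorem mk_eq_mk_of_num_mul_den_eq {M A σ : Type*} [CommRing A] [SetLike σ A] {𝒜 : M → σ}
    {S : Submonoid A} {x y : NumDenSameDeg 𝒜 S}
    (h : (x.num * y.den : A) = y.num * x.den) : mk x = mk y := by
  apply val_injective
  rw [val_mk, val_mk, Localization.mk_eq_mk_iff, Localization.r_iff_exists]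
  refine ⟨1, ?_⟩
  rw [mul_comm (y.den : A), mul_comm (x.den : A), h]

theorem locMap_mk {A : Type*} [CommRing A] {S T : Submonoid A} (h : S ≤ T) (a : A) (s : S) :
    locMap h (Localization.mk a s) = Localization.mk a ⟨s, h s.2⟩ := by
  simp only [locMap, Localization.mk_eq_mk', IsLocalization.map_mk', RingHom.id_apply]

section CanonicalMap

open HomogeneousLocalization

variable {M A σ : Type*} [AddCommMonoid M] [DecidableEq M] [CommRing A] [SetLike σ A]
  [AddSubgroupClass σ A] {𝒜 : M → σ} [GradedRing 𝒜] {S T T' : Submonoid A}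

theorem mapId_mk (h : S ≤ T) (x : NumDenSameDeg 𝒜 S) :
    mapId 𝒜 h (mk x) = mk ⟨x.deg, x.num, x.den, h x.den_mem⟩ :=
  rfl

theorem eq_mapId_of_val_eq_locMap (h : S ≤ T)
    {χ : HomogeneousLocalization 𝒜 S →+* HomogeneousLocalization 𝒜 T}
    (hχ : ∀ w, (χ w).val = locMap h w.val) : χ = mapId 𝒜 h := by
  ext w
  obtain ⟨x, rfl⟩ := mk_surjective w
  rw [hχ, val_mk, locMap_mk, mapId_mk, val_mk]

variable (𝒜) in
/-- The degree-zero fractions over `S` whose numerator divides an element of `T`: the submonoid of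
`A_{(S)}` at which `A_{(T)}` is the localization. -/
def invertedFractions (S T : Submonoid A) : Submonoid (HomogeneousLocalization 𝒜 S) where
  carrier := {w | ∃ x : NumDenSameDeg 𝒜 S, (x.num : A) ∈ T.saturation ∧ mk x = w}
  one_mem' := ⟨1, one_mem T.saturation, mk_one S⟩
  mul_mem' := by
    rintro _ _ ⟨x, hx, rfl⟩ ⟨y, hy, rfl⟩
    exact ⟨x * y, mul_mem hx hy, mk_mul S x y⟩

theorem invertedFractions_mono (h : T ≤ T') :
    invertedFractions 𝒜 S T ≤ invertedFractions 𝒜 S T' := by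
  rintro _ ⟨x, hx, rfl⟩
  exact ⟨x, (Submonoid.gc_saturation A).monotone_l h hx, rfl⟩

theorem DegreeCofinal.exists_mk_mem_invertedFractions (h : DegreeCofinal 𝒜 S T) {b : A}
    (hbT : b ∈ T) {d : M} (hbd : b ∈ 𝒜 d) :
    ∃ e, ∃ c ∈ 𝒜 e, ∃ x : NumDenSameDeg 𝒜 S,
      x.deg = d + e ∧ (x.num : A) = b * c ∧ mk x ∈ invertedFractions 𝒜 S T := by
  obtain ⟨e, c, hce, hcT, s, hsS, hs⟩ := h hbT hbd
  exact ⟨e, c, hce, ⟨d + e, ⟨b * c, SetLike.mul_mem_graded hbd hce⟩, ⟨s, hs⟩, hsS⟩, rfl, rfl, _,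
    mul_mem (Submonoid.le_toSubmonoid_saturation hbT) hcT, rfl⟩

theorem DegreeCofinal.exists_mul_mapId_eq (h : DegreeCofinal 𝒜 S T) (hST : S ≤ T)
    (z : HomogeneousLocalization 𝒜 T) :
    ∃ w, ∃ u ∈ invertedFractions 𝒜 S T, z * mapId 𝒜 hST u = mapId 𝒜 hST w := by
  obtain ⟨z, rfl⟩ := mk_surjective z
  obtain ⟨e, c, hce, x, hxdeg, hxnum, hx⟩ :=
    h.exists_mk_mem_invertedFractions z.den_mem z.den.2
  let w : NumDenSameDeg 𝒜 S := ⟨x.deg, ⟨z.num * c, hxdeg ▸ SetLike.mul_mem_graded z.num.2 hce⟩,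
    x.den, x.den_mem⟩
  refine ⟨mk w, mk x, hx, ?_⟩
  rw [mapId_mk, mapId_mk, ← mk_mul]
  apply mk_eq_mk_of_num_mul_den_eq
  change (z.num * x.num * x.den : A) = z.num * c * (z.den * x.den)
  rw [hxnum]
  ring

theorem DegreeCofinal.exists_mul_eq_zero (h : DegreeCofinal 𝒜 S T)
    (hT : T ≤ SetLike.homogeneousSubmonoid 𝒜) (hST : S ≤ T) {w : HomogeneousLocalization 𝒜 S}
    (hw : mapId 𝒜 hST w = 0) : ∃ u ∈ invertedFractions 𝒜 S T, u * w = 0 := by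
  obtain ⟨w, rfl⟩ := mk_surjective w
  obtain ⟨⟨t, htT⟩, htw : t * (w.num : A) = 0⟩ : ∃ t : T, (t * w.num : A) = 0 := by
    have hval := congrArg val hw
    rwa [mapId_mk, val_mk, val_zero, Localization.mk_eq_mk', IsLocalization.mk'_eq_zero_iff] at hval
  obtain ⟨d, htd⟩ := hT htT
  obtain ⟨e, c, -, x, -, hxnum, hx⟩ := h.exists_mk_mem_invertedFractions htT htd
  refine ⟨mk x, hx, ?_⟩
  rw [← mk_mul]
  apply mk_eq_zero_of_num
  ext
  rw [NumDenSameDeg.num_mul, hxnum, mul_right_comm, htw, zero_mul, ZeroMemClass.coe_zero]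

end CanonicalMap

section PotionSpectrum

open HomogeneousLocalization

variable {M A σ : Type*} [AddCommGroup M] [DecidableEq M] [CommRing A] [SetLike σ A]
  [AddSubgroupClass σ A] {𝒜 : M → σ} [GradedRing 𝒜] {S T T₁ T₂ : Submonoid A}

theorem isUnit_mapId_of_mem_invertedFractions (hT : T ≤ SetLike.homogeneousSubmonoid 𝒜)
    (hST : S ≤ T) {w : HomogeneousLocalization 𝒜 S} (hw : w ∈ invertedFractions 𝒜 S T) :
    IsUnit (mapId 𝒜 hST w) := by
  obtain ⟨x, hx, rfl⟩ := hw
  obtain ⟨e, y, hye, hxyT⟩ := exists_homogeneous_mul_mem hT x.num.2 hx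
  let inv : NumDenSameDeg 𝒜 T :=
    ⟨x.deg + e, ⟨x.den * y, SetLike.mul_mem_graded x.den.2 hye⟩,
      ⟨x.num * y, SetLike.mul_mem_graded x.num.2 hye⟩, hxyT⟩
  refine IsUnit.of_mul_eq_one (mk inv) ?_
  rw [mapId_mk, ← mk_mul, ← mk_one]
  apply mk_eq_mk_of_num_mul_den_eq
  change (x.num * (x.den * y) * 1 : A) = 1 * (x.den * (x.num * y))
  ring

theorem DegreeCofinal.isLocalization (h : DegreeCofinal 𝒜 S T)
    (hT : T ≤ SetLike.homogeneousSubmonoid 𝒜) (hST : S ≤ T) :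
    letI := (mapId 𝒜 hST).toAlgebra
    IsLocalization (invertedFractions 𝒜 S T) (HomogeneousLocalization 𝒜 T) := by
  let := (mapId 𝒜 hST).toAlgebra
  refine ⟨fun u ↦ isUnit_mapId_of_mem_invertedFractions hT hST u.2, fun z ↦ ?_, fun {x y} hxy ↦ ?_⟩
  · obtain ⟨w, u, hu, hzu⟩ := h.exists_mul_mapId_eq hST z
    exact ⟨(w, ⟨u, hu⟩), hzu⟩
  · obtain ⟨u, hu, huxy⟩ := h.exists_mul_eq_zero hT hST (w := x - y)
      ((map_sub _ x y).trans (sub_eq_zero.mpr hxy))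
    exact ⟨⟨u, hu⟩, by rwa [mul_sub, sub_eq_zero] at huxy⟩

theorem DegreeCofinal.range_comap_mapId (h : DegreeCofinal 𝒜 S T)
    (hT : T ≤ SetLike.homogeneousSubmonoid 𝒜) (hST : S ≤ T) :
    Set.range (PrimeSpectrum.comap (mapId 𝒜 hST)) =
      {p | Disjoint (invertedFractions 𝒜 S T : Set (HomogeneousLocalization 𝒜 S)) p.asIdeal} := by
  let := (mapId 𝒜 hST).toAlgebra
  have := h.isLocalization hT hST
  exact PrimeSpectrum.localization_comap_range _ _

theorem exists_dvd_mul_of_mem_invertedFractions_sup (hT₁ : T₁ ≤ SetLike.homogeneousSubmonoid 𝒜)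
    (hT₂ : T₂ ≤ SetLike.homogeneousSubmonoid 𝒜) (h₁ : DegreeCofinal 𝒜 S T₁)
    (h₂ : DegreeCofinal 𝒜 S T₂) {w : HomogeneousLocalization 𝒜 S}
    (hw : w ∈ invertedFractions 𝒜 S (T₁ ⊔ T₂)) :
    ∃ u₁ ∈ invertedFractions 𝒜 S T₁, ∃ u₂ ∈ invertedFractions 𝒜 S T₂, w ∣ u₁ * u₂ := by
  obtain ⟨w, hw, rfl⟩ := hw
  obtain ⟨_, hb, hwb⟩ := Submonoid.mem_saturation_iff_exists_dvd.mp hw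
  obtain ⟨b₁, hb₁, b₂, hb₂, rfl⟩ := Submonoid.mem_sup.mp hb
  obtain ⟨d₁, hd₁⟩ := hT₁ hb₁
  obtain ⟨d₂, hd₂⟩ := hT₂ hb₂
  obtain ⟨e₁, c₁, hc₁, x₁, hxdeg₁, hxnum₁, hx₁⟩ := h₁.exists_mk_mem_invertedFractions hb₁ hd₁
  obtain ⟨e₂, c₂, hc₂, x₂, hxdeg₂, hxnum₂, hx₂⟩ := h₂.exists_mk_mem_invertedFractions hb₂ hd₂
  obtain ⟨y, hy, hwy⟩ :=
    exists_homogeneous_mul_eq_of_dvd w.num.2 (SetLike.mul_mem_graded hd₁ hd₂) hwb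
  have hdeg : w.deg + (d₁ + d₂ - w.deg) + (e₁ + e₂) = x₁.deg + x₂.deg := by
    rw [hxdeg₁, hxdeg₂]
    abel
  let v : NumDenSameDeg 𝒜 S :=
    ⟨x₁.deg + x₂.deg,
      ⟨w.den * y * (c₁ * c₂), hdeg ▸ SetLike.mul_mem_graded
        (SetLike.mul_mem_graded w.den.2 hy) (SetLike.mul_mem_graded hc₁ hc₂)⟩,
      ⟨x₁.den * x₂.den, SetLike.mul_mem_graded x₁.den.2 x₂.den.2⟩,
      mul_mem x₁.den_mem x₂.den_mem⟩
  refine ⟨mk x₁, hx₁, mk x₂, hx₂, mk v, ?_⟩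
  rw [← mk_mul, ← mk_mul]
  apply mk_eq_mk_of_num_mul_den_eq
  change (x₁.num * x₂.num * (w.den * (x₁.den * x₂.den)) : A) =
    w.num * (w.den * y * (c₁ * c₂)) * (x₁.den * x₂.den)
  rw [hxnum₁, hxnum₂]
  linear_combination -(w.den * c₁ * c₂ * x₁.den * x₂.den : A) * hwy

theorem range_comap_mapId_inter (hT₁ : T₁ ≤ SetLike.homogeneousSubmonoid 𝒜)
    (hT₂ : T₂ ≤ SetLike.homogeneousSubmonoid 𝒜) (h₁ : DegreeCofinal 𝒜 S T₁)
    (h₂ : DegreeCofinal 𝒜 S T₂) (hST₁ : S ≤ T₁) (hST₂ : S ≤ T₂) (hST : S ≤ T)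
    (hT : T = T₁ ⊔ T₂) :
    Set.range (PrimeSpectrum.comap (mapId 𝒜 hST₁)) ∩
        Set.range (PrimeSpectrum.comap (mapId 𝒜 hST₂)) =
      Set.range (PrimeSpectrum.comap (mapId 𝒜 hST)) := by
  subst hT
  rw [h₁.range_comap_mapId hT₁, h₂.range_comap_mapId hT₂,
    (h₁.sup hT₁ hT₂ h₂).range_comap_mapId (sup_le hT₁ hT₂)]
  ext p
  refine ⟨fun ⟨hp₁, hp₂⟩ ↦ Set.disjoint_left.mpr fun w hw hwp ↦ ?_, fun hp ↦
    ⟨hp.mono_left (invertedFractions_mono le_sup_left),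
      hp.mono_left (invertedFractions_mono le_sup_right)⟩⟩
  obtain ⟨u₁, hu₁, u₂, hu₂, hdvd⟩ :=
    exists_dvd_mul_of_mem_invertedFractions_sup hT₁ hT₂ h₁ h₂ hw
  exact (p.2.mem_or_mem (p.asIdeal.mem_of_dvd hdvd hwp)).elim
    (Set.disjoint_left.mp hp₁ hu₁) (Set.disjoint_left.mp hp₂ hu₂)

end PotionSpectrum

theorem magic_of_potions_triple_intersection_general
    {M A I J K : Type*} [AddCommGroup M] [DecidableEq M] [CommRing A]
    (𝒜 : M → Submodule ℤ A) [GradedRing 𝒜]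
    (f : I → A) (g : J → A) (k : K → A)
    (hf : ∀ i, ∃ m, f i ∈ 𝒜 m) (hg : ∀ j, ∃ m, g j ∈ 𝒜 m) (hk : ∀ c, ∃ m, k c ∈ 𝒜 m)
    (hrel : IsRelevant 𝒜 f)
    (χg : HomogeneousLocalization 𝒜 (Submonoid.closure (Set.range f)) →+*
        HomogeneousLocalization 𝒜 (Submonoid.closure (Set.range f ∪ Set.range g)))
    (hχg : ∀ w, (χg w).val =
      locMap (Submonoid.closure_mono Set.subset_union_left) w.val)
    (χk : HomogeneousLocalization 𝒜 (Submonoid.closure (Set.range f)) →+*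
        HomogeneousLocalization 𝒜 (Submonoid.closure (Set.range f ∪ Set.range k)))
    (hχk : ∀ w, (χk w).val =
      locMap (Submonoid.closure_mono Set.subset_union_left) w.val)
    (χgk : HomogeneousLocalization 𝒜 (Submonoid.closure (Set.range f)) →+*
        HomogeneousLocalization 𝒜
          (Submonoid.closure (Set.range f ∪ (Set.range g ∪ Set.range k))))
    (hχgk : ∀ w, (χgk w).val =
      locMap (Submonoid.closure_mono Set.subset_union_left) w.val) :
    Set.range (Spec.map (CommRingCat.ofHom χg)).base ∩
        Set.range (Spec.map (CommRingCat.ofHom χk)).base =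
      Set.range (Spec.map (CommRingCat.ofHom χgk)).base := by
  obtain rfl := eq_mapId_of_val_eq_locMap _ hχg
  obtain rfl := eq_mapId_of_val_eq_locMap _ hχk
  obtain rfl := eq_mapId_of_val_eq_locMap _ hχgk
  have hF : Set.range f ⊆ SetLike.homogeneousSubmonoid 𝒜 := Set.range_subset_iff.mpr hf
  have hG : Set.range g ⊆ SetLike.homogeneousSubmonoid 𝒜 := Set.range_subset_iff.mpr hg
  have hK : Set.range k ⊆ SetLike.homogeneousSubmonoid 𝒜 := Set.range_subset_iff.mpr hk
  have hST {G : Set A} : Submonoid.closure (Set.range f) ≤ Submonoid.closure (Set.range f ∪ G) :=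
    Submonoid.closure_mono Set.subset_union_left
  have hcofinal {G : Set A} : DegreeCofinal 𝒜 (Submonoid.closure (Set.range f))
      (Submonoid.closure (Set.range f ∪ G)) :=
    hrel.degreeCofinal (Submonoid.closure_le.mpr hF) Submonoid.subset_closure hST
  refine range_comap_mapId_inter (Submonoid.closure_le.mpr (Set.union_subset hF hG))
    (Submonoid.closure_le.mpr (Set.union_subset hF hK)) hcofinal hcofinal hST hST hST ?_
  rw [← Submonoid.closure_union, Set.union_union_distrib_left]

theorem magic_of_potions_triple_intersection
    {M I J K : Type*} {A : Type} [AddCommGroup M] [DecidableEq M] [CommRing A]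
    [Finite J] [Finite K]
    (𝒜 : M → Submodule ℤ A) [GradedRing 𝒜]
    (f : I → A) (g : J → A) (k : K → A)
    (hf : ∀ i, f i ≠ 0 ∧ ∃ m, f i ∈ 𝒜 m)
    (hg : ∀ j, g j ≠ 0 ∧ ∃ m, g j ∈ 𝒜 m)
    (hk : ∀ c, k c ≠ 0 ∧ ∃ m, k c ∈ 𝒜 m)
    (hrel : IsRelevant 𝒜 f)
    (hdivclosed : {x : A | x ≠ 0 ∧ (∃ m, x ∈ 𝒜 m) ∧ ∃ i, x ∣ f i} = Set.range f)
    (χg : HomogeneousLocalization 𝒜 (Submonoid.closure (Set.range f)) →+*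
        HomogeneousLocalization 𝒜 (Submonoid.closure (Set.range f ∪ Set.range g)))
    (hχg : ∀ w, (χg w).val =
      locMap (Submonoid.closure_mono Set.subset_union_left) w.val)
    (χk : HomogeneousLocalization 𝒜 (Submonoid.closure (Set.range f)) →+*
        HomogeneousLocalization 𝒜 (Submonoid.closure (Set.range f ∪ Set.range k)))
    (hχk : ∀ w, (χk w).val =
      locMap (Submonoid.closure_mono Set.subset_union_left) w.val)
    (χgk : HomogeneousLocalization 𝒜 (Submonoid.closure (Set.range f)) →+*
        HomogeneousLocalization 𝒜
          (Submonoid.closure (Set.range f ∪ (Set.range g ∪ Set.range k))))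
    (hχgk : ∀ w, (χgk w).val =
      locMap (Submonoid.closure_mono Set.subset_union_left) w.val) :
    Set.range (Spec.map (CommRingCat.ofHom χg)).base ∩
        Set.range (Spec.map (CommRingCat.ofHom χk)).base =
      Set.range (Spec.map (CommRingCat.ofHom χgk)).base :=
  magic_of_potions_triple_intersection_general 𝒜 f g k (fun i ↦ (hf i).2) (fun j ↦ (hg j).2)
    (fun c ↦ (hk c).2) hrel χg hχg χk hχk χgk hχgk
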